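/- Let αᵢ, βᵢ, γᵢ ∈ ℝ for i = 1, 2, 3, define residᵢ(ε, σ) = αᵢε + βᵢσ − γᵢ, p₁ = α₁ − α₂, q₁ = β₁ − β₂, r₁ = γ₁ − γ₂, p₂ = α₂ − α₃, q₂ = β₂ − β₃, r₂ = γ₂ − γ₃. For τ ≥ 0, define C(τ) as the set of (ε, σ) ∈ ℝ² such that at least one of the following holds: (p₁ε + q₁σ ≤ r₁ and |resid₁| ≤ τ), or (p₁ε + q₁σ ≥ r₁ and p₂ε + q₂σ ≤ r₂ and |resid₂| ≤ τ), or (p₂ε + q₂σ ≥ r₂ and |resid₃| ≤ τ). Fix (ε, σ) ∈ ℝ² and let M ∈ ℝ satisfy M ≥ |pⱼε + qⱼσ − rⱼ| for j = 1, 2 and M ≥ |residᵢ(ε, σ)| − τ for i = 1, 2, 3. Then (ε, σ) ∈ C(τ) if and only if there exist s₁, s₂ ∈ {0, 1} with s₁ ≥ s₂ such that: p₁ε + q₁σ ≤ r₁ + M(s₁ + s₂); p₁ε + q₁σ ≥ r₁ − M(1 − s₁ + s₂); p₂ε + q₂σ ≤ r₂ + M(1 − s₁ + s₂); p₂ε +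 q₂σ ≥ r₂ − M(2 − s₁ − s₂); |resid₁| ≤ τ + M(s₁ + s₂); |resid₂| ≤ τ + M(1 − s₁ + s₂); and |resid₃| ≤ τ + M(2 − s₁ − s₂). -/

import Mathlib

/-!
The ordered binary pairs are `(0, 0)`, `(1, 0)`, `(1, 1)`, one for each of the three pieces of
`C(τ)`, and `s₁ + s₂`, `1 - s₁ + s₂`, `2 - s₁ - s₂` are the `ℓ¹`-distances from `(s₁, s₂)` to them.
The pair belonging to a piece therefore imposes the constraints of that piece exactly, and loosens
those of the other two by at least `M`, which is enough slack to make them hold automatically.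
-/

section Disjunction

variable {ι S R : Type*}

/-- The penalty `d` detects the codewords `code`: it vanishes at the codeword of an alternative and
is at least one at every other codeword. In a big-M formulation, `M * d s i` is the slack that the
choice `s` of the binary variables grants to the alternative `i`. -/
structure IsCodePenalty [Zero R] [One R] [LE R] (code : ι → S) (d : S → ι → R) : Prop where
  eq_zero : ∀ i, d (code i) i = 0
  one_le : ∀ ⦃i j⦄, i ≠ j → 1 ≤ d (code i) j

theorem IsCodePenalty.exists_iff_exists_forall_mul [MulZeroOneClass R] [Preorder R] [PosMulMono R]
    {code : ι → S} {d : S → ι → R} (hd : IsCodePenalty code d) {P : ι → R → Prop}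
    (hmono : ∀ i, Monotone (P i)) {M : R} (hM₀ : 0 ≤ M) (hM : ∀ i, P i M) :
    (∃ i, P i 0) ↔ ∃ s ∈ Set.range code, ∀ i, P i (M * d s i) := by
  rw [Set.exists_range_iff]
  refine exists_congr fun i => ⟨fun hi j => ?_, fun h => ?_⟩
  · rcases eq_or_ne i j with rfl | hij
    · rwa [hd.eq_zero, mul_zero]
    · exact hmono j (le_mul_of_one_le_right hM₀ (hd.one_le hij)) (hM j)
  · simpa only [hd.eq_zero, mul_zero] using h i

end Disjunction

section OrderedBinaryPairs

variable {R : Type*}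

/-- The three binary pairs `(s₁, s₂)` with `s₂ ≤ s₁`, listed so that the number of ones is the
index of the piece they select. -/
def orderedBinaryCode [Zero R] [One R] : Fin 3 → R × R :=
  ![(0, 0), (1, 0), (1, 1)]

/-- The `ℓ¹`-distances from a point of the unit square to the three ordered binary pairs, written
without absolute values and hence affine on the whole plane. -/
def orderedBinaryPenalty [AddGroupWithOne R] (s : R × R) : Fin 3 → R :=
  ![s.1 + s.2, 1 - s.1 + s.2, 2 - s.1 - s.2]

theorem mem_range_orderedBinaryCode [Zero R] [One R] [PartialOrder R] [ZeroLEOneClass R]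
    [NeZero (1 : R)] {s₁ s₂ : R} :
    (s₁, s₂) ∈ Set.range orderedBinaryCode ↔
      (s₁ = 0 ∨ s₁ = 1) ∧ (s₂ = 0 ∨ s₂ = 1) ∧ s₂ ≤ s₁ := by
  constructor
  · rintro ⟨i, hi⟩
    fin_cases i <;> obtain ⟨rfl, rfl⟩ := Prod.mk.inj hi <;> simp
  · rintro ⟨rfl | rfl, rfl | rfl, hle⟩
    · exact ⟨0, rfl⟩
    · exact absurd hle zero_lt_one.not_ge
    · exact ⟨1, rfl⟩
    · exact ⟨2, rfl⟩

theorem isCodePenalty_orderedBinary [Ring R] [PartialOrder R] [IsOrderedRing R] :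
    IsCodePenalty (orderedBinaryCode (R := R)) orderedBinaryPenalty where
  eq_zero i := by
    fin_cases i <;> norm_num [orderedBinaryCode, orderedBinaryPenalty]
  one_le i j hij := by
    fin_cases i <;> fin_cases j <;>
      first
      | exact absurd rfl hij
      | norm_num [orderedBinaryCode, orderedBinaryPenalty]

end OrderedBinaryPairs

section TwoBreakpoints

variable {R : Type*} {x₁ r₁ x₂ r₂ ρ₁ ρ₂ ρ₃ τ : R}

/-- The constraints defining the three pieces of `C(τ)`, all loosened by `t`. Here `xⱼ` stands for
`pⱼ ε + qⱼ σ` and `ρᵢ` for `|residᵢ|`, so `t = 0` gives the pieces themselves,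
numbered from zero. -/
def RelaxedPiece [AddGroup R] [LE R] (x₁ r₁ x₂ r₂ ρ₁ ρ₂ ρ₃ τ : R) : Fin 3 → R → Prop
  | 0, t => x₁ ≤ r₁ + t ∧ ρ₁ ≤ τ + t
  | 1, t => r₁ - t ≤ x₁ ∧ x₂ ≤ r₂ + t ∧ ρ₂ ≤ τ + t
  | 2, t => r₂ - t ≤ x₂ ∧ ρ₃ ≤ τ + t

theorem RelaxedPiece.monotone [AddCommGroup R] [Preorder R] [IsOrderedAddMonoid R] (i : Fin 3) :
    Monotone (RelaxedPiece x₁ r₁ x₂ r₂ ρ₁ ρ₂ ρ₃ τ i) := by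
  intro t u htu h
  have upper {a b : R} (hab : a ≤ b + t) : a ≤ b + u := hab.trans (by gcongr)
  have lower {a b : R} (hab : b - t ≤ a) : b - u ≤ a := le_trans (by gcongr) hab
  fin_cases i
  · exact ⟨upper h.1, upper h.2⟩
  · exact ⟨lower h.1, upper h.2.1, upper h.2.2⟩
  · exact ⟨lower h.1, upper h.2⟩

theorem RelaxedPiece.of_abs_sub_le [AddCommGroup R] [LinearOrder R] [IsOrderedAddMonoid R]
    {M : R} (h₁ : |x₁ - r₁| ≤ M) (h₂ : |x₂ - r₂| ≤ M)
    (hρ₁ : ρ₁ - τ ≤ M) (hρ₂ : ρ₂ - τ ≤ M) (hρ₃ : ρ₃ - τ ≤ M) (i : Fin 3) :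
    RelaxedPiece x₁ r₁ x₂ r₂ ρ₁ ρ₂ ρ₃ τ i M := by
  rw [abs_sub_le_iff] at h₁ h₂
  fin_cases i
  · exact ⟨sub_le_iff_le_add'.mp h₁.1, sub_le_iff_le_add'.mp hρ₁⟩
  · exact ⟨sub_le_comm.mp h₁.2, sub_le_iff_le_add'.mp h₂.1, sub_le_iff_le_add'.mp hρ₂⟩
  · exact ⟨sub_le_comm.mp h₂.2, sub_le_iff_le_add'.mp hρ₃⟩

theorem exists_relaxedPiece_zero_iff [AddGroup R] [LE R] :
    (∃ i, RelaxedPiece x₁ r₁ x₂ r₂ ρ₁ ρ₂ ρ₃ τ i 0) ↔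
      (x₁ ≤ r₁ ∧ ρ₁ ≤ τ) ∨ (r₁ ≤ x₁ ∧ x₂ ≤ r₂ ∧ ρ₂ ≤ τ) ∨ (r₂ ≤ x₂ ∧ ρ₃ ≤ τ) := by
  simp [Fin.exists_fin_succ, RelaxedPiece]

theorem forall_relaxedPiece_orderedBinaryPenalty_iff [Ring R] [LE R] {M s₁ s₂ : R} :
    (∀ i, RelaxedPiece x₁ r₁ x₂ r₂ ρ₁ ρ₂ ρ₃ τ i (M * orderedBinaryPenalty (s₁, s₂) i)) ↔
      x₁ ≤ r₁ + M * (s₁ + s₂) ∧ r₁ - M * (1 - s₁ + s₂) ≤ x₁ ∧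
      x₂ ≤ r₂ + M * (1 - s₁ + s₂) ∧ r₂ - M * (2 - s₁ - s₂) ≤ x₂ ∧
      ρ₁ ≤ τ + M * (s₁ + s₂) ∧ ρ₂ ≤ τ + M * (1 - s₁ + s₂) ∧ ρ₃ ≤ τ + M * (2 - s₁ - s₂) := by
  constructor
  · intro h
    exact ⟨(h 0).1, (h 1).1, (h 1).2.1, (h 2).1, (h 0).2, (h 1).2.2, (h 2).2⟩
  · rintro ⟨hx₁, hx₁', hx₂, hx₂', hρ₁, hρ₂, hρ₃⟩ i
    fin_cases i
    · exact ⟨hx₁, hρ₁⟩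
    · exact ⟨hx₁', hx₂, hρ₂⟩
    · exact ⟨hx₂', hρ₃⟩

theorem bigM_two_breakpoints_general [Ring R] [LinearOrder R] [IsStrictOrderedRing R]
    {M : R} (h₁ : |x₁ - r₁| ≤ M) (h₂ : |x₂ - r₂| ≤ M)
    (hρ₁ : ρ₁ - τ ≤ M) (hρ₂ : ρ₂ - τ ≤ M) (hρ₃ : ρ₃ - τ ≤ M) :
    ((x₁ ≤ r₁ ∧ ρ₁ ≤ τ) ∨ (r₁ ≤ x₁ ∧ x₂ ≤ r₂ ∧ ρ₂ ≤ τ) ∨ (r₂ ≤ x₂ ∧ ρ₃ ≤ τ)) ↔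
      ∃ s₁ s₂ : R, (s₁ = 0 ∨ s₁ = 1) ∧ (s₂ = 0 ∨ s₂ = 1) ∧ s₂ ≤ s₁ ∧
        x₁ ≤ r₁ + M * (s₁ + s₂) ∧ r₁ - M * (1 - s₁ + s₂) ≤ x₁ ∧
        x₂ ≤ r₂ + M * (1 - s₁ + s₂) ∧ r₂ - M * (2 - s₁ - s₂) ≤ x₂ ∧
        ρ₁ ≤ τ + M * (s₁ + s₂) ∧ ρ₂ ≤ τ + M * (1 - s₁ + s₂) ∧ ρ₃ ≤ τ + M * (2 - s₁ - s₂) := by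
  have hM : 0 ≤ M := (abs_nonneg _).trans h₁
  rw [← exists_relaxedPiece_zero_iff,
    isCodePenalty_orderedBinary.exists_iff_exists_forall_mul RelaxedPiece.monotone hM
      (RelaxedPiece.of_abs_sub_le h₁ h₂ hρ₁ hρ₂ hρ₃)]
  simp only [Prod.exists, mem_range_orderedBinaryCode,
    forall_relaxedPiece_orderedBinaryPenalty_iff, and_assoc]

end TwoBreakpoints

/-- Big-M mixed-integer reformulation of the two-breakpoint (three-line)
uncertainty set `C(τ)` used for the truss equilibrium analysis, with two
ordered binary variables `s₁ ≥ s₂`. -/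
theorem bigM_two_breakpoints
    (α₁ β₁ γ₁ α₂ β₂ γ₂ α₃ β₃ γ₃ : ℝ)
    (p₁ q₁ r₁ p₂ q₂ r₂ : ℝ)
    (hp₁ : p₁ = α₁ - α₂) (hq₁ : q₁ = β₁ - β₂) (hr₁ : r₁ = γ₁ - γ₂)
    (hp₂ : p₂ = α₂ - α₃) (hq₂ : q₂ = β₂ - β₃) (hr₂ : r₂ = γ₂ - γ₃)
    (τ : ℝ) (hτ : 0 ≤ τ) (ε σ : ℝ) (M : ℝ)
    (hM1 : M ≥ |p₁ * ε + q₁ * σ - r₁|)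
    (hM2 : M ≥ |p₂ * ε + q₂ * σ - r₂|)
    (hMr1 : M ≥ |α₁ * ε + β₁ * σ - γ₁| - τ)
    (hMr2 : M ≥ |α₂ * ε + β₂ * σ - γ₂| - τ)
    (hMr3 : M ≥ |α₃ * ε + β₃ * σ - γ₃| - τ) :
    ((p₁ * ε + q₁ * σ ≤ r₁ ∧ |α₁ * ε + β₁ * σ - γ₁| ≤ τ) ∨
     (p₁ * ε + q₁ * σ ≥ r₁ ∧ p₂ * ε + q₂ * σ ≤ r₂ ∧
       |α₂ * ε + β₂ * σ - γ₂| ≤ τ) ∨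
     (p₂ * ε + q₂ * σ ≥ r₂ ∧ |α₃ * ε + β₃ * σ - γ₃| ≤ τ)) ↔
    (∃ s₁ s₂ : ℝ, (s₁ = 0 ∨ s₁ = 1) ∧ (s₂ = 0 ∨ s₂ = 1) ∧ s₂ ≤ s₁ ∧
      p₁ * ε + q₁ * σ ≤ r₁ + M * (s₁ + s₂) ∧
      p₁ * ε + q₁ * σ ≥ r₁ - M * (1 - s₁ + s₂) ∧
      p₂ * ε + q₂ * σ ≤ r₂ + M * (1 - s₁ + s₂) ∧
      p₂ * ε + q₂ * σ ≥ r₂ - M * (2 - s₁ - s₂) ∧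
      |α₁ * ε + β₁ * σ - γ₁| ≤ τ + M * (s₁ + s₂) ∧
      |α₂ * ε + β₂ * σ - γ₂| ≤ τ + M * (1 - s₁ + s₂) ∧
      |α₃ * ε + β₃ * σ - γ₃| ≤ τ + M * (2 - s₁ - s₂)) :=
  bigM_two_breakpoints_general hM1 hM2 hMr1 hMr2 hMr3
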